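/- arXiv:1108.4257 — 2 statements merged into one kernel-verified Lean document; each statement's English description precedes it below -/
import Mathlib

section
/- For LOC(H,T) with any α-type input distribution, I(X;Y) ≥ J(rank(X);rank(Y)) + I(⟨X^T⟩;⟨Y^T⟩), where Y = XH; moreover, equality holds if LOC(H,T) is row-space symmetric. -/
open scoped Classical
open Finset Matrix Module

noncomputable section

/-- χ_m[r] = (q^m − 1)(q^m − q)⋯(q^m − q^{r−1}), with χ_m[0] = 1. -/
def chi (q m r : ℕ) : ℕ := ∏ i ∈ Finset.range r, (q ^ m - q ^ i)

/-- χ̃_m[r] = χ_m[r] · q^{−mr}, as a real number. -/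
def chiTilde (q m r : ℕ) : ℝ := (chi q m r : ℝ) / (q : ℝ) ^ (m * r)

/-- Gaussian binomial [m choose r]_q = χ_m[r]/χ_r[r], as a real number. -/
def gaussR (q m r : ℕ) : ℝ := (chi q m r : ℝ) / (chi q r r : ℝ)

variable {F : Type} [Field F] [Fintype F]

/-- Column space of a matrix. -/
def colSpace {m n : ℕ} (A : Matrix (Fin m) (Fin n) F) : Submodule F (Fin m → F) :=
  LinearMap.range A.mulVecLin

/-- Row space of a matrix. -/
def rowSpace {m n : ℕ} (A : Matrix (Fin m) (Fin n) F) : Submodule F (Fin n → F) :=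
  colSpace Aᵀ

/-- Pr{XH = Y} for a random transfer matrix H with PMF `pH`, input `X`, output `Y`. -/
def prXY {k M N : ℕ} (pH : Matrix (Fin M) (Fin N) F → ℝ)
    (X : Matrix (Fin k) (Fin M) F) (Y : Matrix (Fin k) (Fin N) F) : ℝ :=
  ∑ Hm : Matrix (Fin M) (Fin N) F, if X * Hm = Y then pH Hm else 0

/-- A PMF on a finite type: nonnegative and summing to one. -/
def IsPMF {Ω : Type*} [Fintype Ω] (p : Ω → ℝ) : Prop :=
  (∀ x, 0 ≤ p x) ∧ ∑ x, p x = 1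

/-- α-type distribution: matrices with the same row space are equiprobable. -/
def IsAlphaType {T M : ℕ} (p : Matrix (Fin T) (Fin M) F → ℝ) : Prop :=
  ∀ X X' : Matrix (Fin T) (Fin M) F, rowSpace X = rowSpace X' → p X = p X'

/-- Mutual information I(f;g) (base 2) between two functions of a finitely
distributed random element with PMF `p`; terms of zero probability vanish. -/
def mutualInfo {Ω A B : Type*} [Fintype Ω] (p : Ω → ℝ) (f : Ω → A) (g : Ω → B) : ℝ :=
  ∑ ω : Ω, p ω * Real.logb 2
    ((∑ ω' : Ω, if f ω' = f ω ∧ g ω' = g ω then p ω' else 0) /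
      ((∑ ω' : Ω, if f ω' = f ω then p ω' else 0) *
        (∑ ω' : Ω, if g ω' = g ω then p ω' else 0)))

/-- Joint PMF of the input X and the independent transfer matrix H;
the channel output is Y = XH, i.e., `ω.1 * ω.2`. -/
def jointPMF {T M N : ℕ} (pX : Matrix (Fin T) (Fin M) F → ℝ)
    (pH : Matrix (Fin M) (Fin N) F → ℝ) :
    Matrix (Fin T) (Fin M) F × Matrix (Fin M) (Fin N) F → ℝ :=
  fun ω => pX ω.1 * pH ω.2

/-- I(X;Y) for the LOC with input PMF `pX` and transfer PMF `pH`. -/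
def miXY {T M N : ℕ} (pX : Matrix (Fin T) (Fin M) F → ℝ)
    (pH : Matrix (Fin M) (Fin N) F → ℝ) : ℝ :=
  mutualInfo (jointPMF pX pH) (fun ω => ω.1) (fun ω => ω.1 * ω.2)

/-- I(⟨X⟩;⟨Y⟩), mutual information between the column spaces. -/
def miColCol {T M N : ℕ} (pX : Matrix (Fin T) (Fin M) F → ℝ)
    (pH : Matrix (Fin M) (Fin N) F → ℝ) : ℝ :=
  mutualInfo (jointPMF pX pH) (fun ω => colSpace ω.1) (fun ω => colSpace (ω.1 * ω.2))

/-- I(⟨X^T⟩;⟨Y^T⟩), mutual information between the row spaces. -/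
def miRowRow {T M N : ℕ} (pX : Matrix (Fin T) (Fin M) F → ℝ)
    (pH : Matrix (Fin M) (Fin N) F → ℝ) : ℝ :=
  mutualInfo (jointPMF pX pH) (fun ω => rowSpace ω.1) (fun ω => rowSpace (ω.1 * ω.2))

/-- I(rank(X);rank(Y)). -/
def miRankRank {T M N : ℕ} (pX : Matrix (Fin T) (Fin M) F → ℝ)
    (pH : Matrix (Fin M) (Fin N) F → ℝ) : ℝ :=
  mutualInfo (jointPMF pX pH) (fun ω => ω.1.rank) (fun ω => (ω.1 * ω.2).rank)

/-- Pr{rank(X) = r}. -/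
def prRankX {T M : ℕ} (pX : Matrix (Fin T) (Fin M) F → ℝ) (r : ℕ) : ℝ :=
  ∑ x : Matrix (Fin T) (Fin M) F, if x.rank = r then pX x else 0

/-- Pr{rank(X) = r, rank(Y) = s} where Y = XH. -/
def prRankXY {T M N : ℕ} (pX : Matrix (Fin T) (Fin M) F → ℝ)
    (pH : Matrix (Fin M) (Fin N) F → ℝ) (r s : ℕ) : ℝ :=
  ∑ ω : Matrix (Fin T) (Fin M) F × Matrix (Fin M) (Fin N) F,
    if ω.1.rank = r ∧ (ω.1 * ω.2).rank = s then jointPMF pX pH ω else 0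

/-- J(rank(X);rank(Y)) = ∑_{r,s} Pr{rank X = r, rank Y = s} · log₂(χ_T[s]/χ_r[s]). -/
def Jrank (q : ℕ) {T M N : ℕ} (pX : Matrix (Fin T) (Fin M) F → ℝ)
    (pH : Matrix (Fin M) (Fin N) F → ℝ) : ℝ :=
  ∑ r ∈ Finset.range (T + 1), ∑ s ∈ Finset.range (T + 1),
    prRankXY pX pH r s * Real.logb 2 ((chi q T s : ℝ) / (chi q r s : ℝ))

/-- Row-space-symmetric LOC: the transition probability P(Y|X) for ⟨Y⟩ ⊆ ⟨X⟩
is determined by the row spaces of the input and output matrices. -/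
def RowSpaceSymmetric (T : ℕ) {M N : ℕ} (pH : Matrix (Fin M) (Fin N) F → ℝ) : Prop :=
  ∀ (X X' : Matrix (Fin T) (Fin M) F) (Y Y' : Matrix (Fin T) (Fin N) F),
    colSpace Y ≤ colSpace X → colSpace Y' ≤ colSpace X' →
    rowSpace X = rowSpace X' → rowSpace Y = rowSpace Y' →
    prXY pH X Y = prXY pH X' Y'

/-- Pr{⟨XH⟩ = V} for a fixed input matrix X. -/
def prColY (T : ℕ) {M N : ℕ} (pH : Matrix (Fin M) (Fin N) F → ℝ)
    (X : Matrix (Fin T) (Fin M) F) (V : Submodule F (Fin T → F)) : ℝ :=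
  ∑ Hm : Matrix (Fin M) (Fin N) F, if colSpace (X * Hm) = V then pH Hm else 0

/-- Unique subspace degradation: Pr{⟨XH⟩ = V} is the same for all inputs X
with the same column space. -/
def UniqueSubspaceDegradation (T : ℕ) {M N : ℕ}
    (pH : Matrix (Fin M) (Fin N) F → ℝ) : Prop :=
  ∀ (V : Submodule F (Fin T → F)) (X X' : Matrix (Fin T) (Fin M) F),
    colSpace X = colSpace X' → prColY T pH X V = prColY T pH X' V

/-- Rank-symmetric LOC: P(Y|X) = μ(rank X, rank Y) when ⟨Y⟩ ⊆ ⟨X⟩, and 0 otherwise. -/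
def RankSymmetric (T : ℕ) {M N : ℕ} (pH : Matrix (Fin M) (Fin N) F → ℝ) : Prop :=
  ∃ μ : ℕ → ℕ → ℝ, (∀ a b, 0 ≤ μ a b ∧ μ a b ≤ 1) ∧
    ∀ (X : Matrix (Fin T) (Fin M) F) (Y : Matrix (Fin T) (Fin N) F),
      prXY pH X Y = if colSpace Y ≤ colSpace X then μ X.rank Y.rank else 0

/-- rank*(H) = max{r : Pr{rank H = r} > 0}. -/
def rankStar {M N : ℕ} (pH : Matrix (Fin M) (Fin N) F → ℝ) : ℕ :=
  sSup {r : ℕ | 0 < ∑ Hm : Matrix (Fin M) (Fin N) F, if Hm.rank = r then pH Hm else 0}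

set_option linter.unusedSectionVars false

lemma rowSpace_eq_span {m n : ℕ} (A : Matrix (Fin m) (Fin n) F) :
    rowSpace A = Submodule.span F (Set.range A.row) := by
  unfold rowSpace colSpace
  rw [Matrix.range_mulVecLin, Matrix.col_transpose]

lemma finrank_rowSpace {m n : ℕ} (A : Matrix (Fin m) (Fin n) F) :
    finrank F (rowSpace A) = A.rank := by
  rw [rowSpace_eq_span, ← Matrix.rank_eq_finrank_span_row]

lemma finrank_colSpace {m n : ℕ} (A : Matrix (Fin m) (Fin n) F) :
    finrank F (colSpace A) = A.rank := rfl

lemma colSpace_mul_le {m n k : ℕ} (A : Matrix (Fin m) (Fin n) F) (B : Matrix (Fin n) (Fin k) F) :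
    colSpace (A * B) ≤ colSpace A := by
  unfold colSpace
  rw [Matrix.mulVecLin_mul]
  exact LinearMap.range_comp_le_range _ _

lemma rowSpace_mul_le {m n k : ℕ} (A : Matrix (Fin m) (Fin n) F) (B : Matrix (Fin n) (Fin k) F) :
    rowSpace (A * B) ≤ rowSpace B := by
  unfold rowSpace
  rw [Matrix.transpose_mul]
  exact colSpace_mul_le _ _

lemma exists_left_factor {m k n : ℕ} (A : Matrix (Fin m) (Fin n) F) (B : Matrix (Fin k) (Fin n) F)
    (h : rowSpace A ≤ rowSpace B) : ∃ D : Matrix (Fin m) (Fin k) F, A = D * B := by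
  have h1 : ∀ i, ∃ v : Fin k → F, Bᵀ *ᵥ v = A i := by
    intro i
    have : A i ∈ rowSpace A := by
      rw [rowSpace_eq_span]
      exact Submodule.subset_span ⟨i, rfl⟩
    obtain ⟨v, hv⟩ := h this
    exact ⟨v, hv⟩
  choose D hD using h1
  refine ⟨Matrix.of D, ?_⟩
  ext i j
  rw [← hD i]
  simp [Matrix.mul_apply, Matrix.mulVec, dotProduct, mul_comm]

lemma exists_gl {m n : ℕ} (A B : Matrix (Fin m) (Fin n) F) (h : rowSpace A = rowSpace B) :
    ∃ G G' : Matrix (Fin m) (Fin m) F, G * G' = 1 ∧ G' * G = 1 ∧ G * A = B := by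
  obtain ⟨D, hD⟩ := exists_left_factor B A h.ge
  obtain ⟨E, hE⟩ := exists_left_factor A B h.le
  have hinj : Function.Injective (D.mulVecLin.domRestrict (colSpace A)) := by
    rw [injective_iff_map_eq_zero]
    rintro ⟨x, v, rfl⟩ hx
    have hx' : D *ᵥ (A *ᵥ v) = 0 := hx
    have h2 : A *ᵥ v = 0 := by
      rw [Matrix.mulVec_mulVec, ← hD] at hx'
      rw [hE, ← Matrix.mulVec_mulVec, hx', Matrix.mulVec_zero]
    exact Subtype.ext h2
  obtain ⟨g, hg⟩ := Submodule.exists_linearEquiv_restrict_eq (LinearEquiv.ofInjective _ hinj)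
  refine ⟨LinearMap.toMatrix' g.toLinearMap, LinearMap.toMatrix' g.symm.toLinearMap, ?_, ?_, ?_⟩
  · rw [← LinearMap.toMatrix'_comp]; simp
  · rw [← LinearMap.toMatrix'_comp]; simp
  · apply Matrix.mulVec_injective
    funext v
    rw [← Matrix.mulVec_mulVec, hD, ← Matrix.mulVec_mulVec, LinearMap.toMatrix'_mulVec]
    exact (hg ⟨A *ᵥ v, v, rfl⟩).symm

lemma rowSpace_gl {m n : ℕ} (A : Matrix (Fin m) (Fin n) F) (G G' : Matrix (Fin m) (Fin m) F)
    (h : G' * G = 1) : rowSpace (G * A) = rowSpace A := by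
  apply le_antisymm (rowSpace_mul_le _ _)
  conv_lhs => rw [← Matrix.one_mul A, ← h, Matrix.mul_assoc]
  exact rowSpace_mul_le _ _

/-- Number of matrices with prescribed row space and column space inside `W`. -/
lemma card_row_col {m n : ℕ} (V : Submodule F (Fin n → F)) (W : Submodule F (Fin m → F))
    (hVW : finrank F V ≤ finrank F W) :
    (Finset.univ.filter (fun y : Matrix (Fin m) (Fin n) F => rowSpace y = V ∧ colSpace y ≤ W)).card
      = chi (Fintype.card F) (finrank F W) (finrank F V) := by
  obtain ⟨s, hs⟩ : ∃ s, s = finrank F V := ⟨_, rfl⟩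
  rw [← hs] at hVW ⊢
  have hcard := card_linearIndependent (K := F) (V := W) hVW
  unfold chi
  rw [Finset.prod_range, ← hcard, ← Fintype.card_subtype, ← Nat.card_eq_fintype_card]
  symm
  let b : Basis (Fin s) F V := Module.finBasisOfFinrankEq F V hs.symm
  let B : Matrix (Fin s) (Fin n) F := Matrix.of fun i => (b i : Fin n → F)
  have hBV : rowSpace B = V := by
    rw [rowSpace_eq_span]
    have := b.span_eq
    have h2 : Set.range B.row = V.subtype '' Set.range b := by
      rw [← Set.range_comp]; rfl
    rw [h2, Submodule.span_image, this, Submodule.map_top, Submodule.range_subtype]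
  have hBr : B.rank = s := by rw [← finrank_rowSpace, hBV, hs]
  have hBsurj : LinearMap.range B.mulVecLin = ⊤ := by
    apply Submodule.eq_top_of_finrank_eq
    rw [Module.finrank_fin_fun]
    exact hBr
  have hcol : ∀ C : Matrix (Fin m) (Fin s) F, colSpace (C * B) = colSpace C := by
    intro C
    unfold colSpace
    rw [Matrix.mulVecLin_mul, LinearMap.range_comp, hBsurj, Submodule.map_top]
  have hBinj : ∀ C C' : Matrix (Fin m) (Fin s) F, C * B = C' * B → C = C' := by
    intro C C' h
    apply Matrix.mulVec_injective
    funext v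
    obtain ⟨w, hw⟩ := LinearMap.range_eq_top.1 hBsurj v
    have hw' : B *ᵥ w = v := hw
    rw [← hw', Matrix.mulVec_mulVec, Matrix.mulVec_mulVec, h]
  let mk : (Fin s → W) → Matrix (Fin m) (Fin s) F := fun c => Matrix.of fun i j => (c j : Fin m → F) i
  have hmkcol : ∀ c, (mk c).col = fun j => (c j : Fin m → F) := fun c => rfl
  have hli : ∀ c : Fin s → W, LinearIndependent F c ↔ (mk c).rank = s := by
    intro c
    rw [Matrix.rank_eq_finrank_span_cols, hmkcol]
    have h1 : LinearIndependent F c ↔ LinearIndependent F (fun j => (c j : Fin m → F)) :=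
      (LinearMap.linearIndependent_iff W.subtype (Submodule.ker_subtype W)).symm
    rw [h1, linearIndependent_iff_card_eq_finrank_span, Fintype.card_fin, eq_comm]
    rfl
  have hmkle : ∀ c, colSpace (mk c) ≤ W := by
    intro c
    unfold colSpace
    rw [Matrix.range_mulVecLin, Submodule.span_le, hmkcol]
    rintro _ ⟨j, rfl⟩
    exact (c j).2
  apply Nat.card_congr
  refine Equiv.ofBijective (fun c => ⟨mk c.1 * B, ?_, ?_⟩) ⟨?_, ?_⟩
  · apply Submodule.eq_of_le_of_finrank_eq
    · exact (rowSpace_mul_le _ _).trans hBV.le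
    · rw [finrank_rowSpace, ← finrank_colSpace, hcol, finrank_colSpace, (hli _).1 c.2, hs]
  · rw [hcol]; exact hmkle _
  · rintro ⟨c, hc⟩ ⟨c', hc'⟩ h
    have h1 := hBinj _ _ (congrArg Subtype.val h)
    apply Subtype.ext
    funext j
    apply Subtype.ext
    funext i
    exact congrFun (congrFun h1 i) j
  · rintro ⟨y, hy1, hy2⟩
    obtain ⟨C, hC⟩ := exists_left_factor y B (hy1.trans hBV.symm).le
    have hCW : ∀ j, C.col j ∈ W := by
      intro j
      apply hy2
      rw [hC, hcol]
      unfold colSpace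
      rw [Matrix.range_mulVecLin]
      exact Submodule.subset_span ⟨j, rfl⟩
    let c : Fin s → W := fun j => ⟨C.col j, hCW j⟩
    have hmk : mk c = C := rfl
    refine ⟨⟨c, ?_⟩, ?_⟩
    · rw [hli, hmk, ← finrank_colSpace, ← hcol, ← hC, finrank_colSpace, ← finrank_rowSpace, hy1, hs]
    · apply Subtype.ext
      exact hC.symm

lemma chi_pos {q m r : ℕ} (hq : 2 ≤ q) (h : r ≤ m) : 0 < chi q m r := by
  unfold chi
  apply Finset.prod_pos
  intro i hi
  have := Nat.pow_lt_pow_right (a := q) (by omega) (show i < m from (Finset.mem_range.1 hi).trans_le h)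
  omega

lemma sum_push {T M N : ℕ} (pX : Matrix (Fin T) (Fin M) F → ℝ) (pH : Matrix (Fin M) (Fin N) F → ℝ)
    (f : Matrix (Fin T) (Fin M) F → Matrix (Fin T) (Fin N) F → ℝ) :
    ∑ ω : Matrix (Fin T) (Fin M) F × Matrix (Fin M) (Fin N) F,
      jointPMF pX pH ω * f ω.1 (ω.1 * ω.2) = ∑ x, ∑ y, pX x * prXY pH x y * f x y := by
  rw [Fintype.sum_prod_type]
  apply Finset.sum_congr rfl
  intro x _
  unfold prXY jointPMF
  simp only [Finset.mul_sum, Finset.sum_mul]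
  rw [Finset.sum_comm]
  apply Finset.sum_congr rfl
  intro h _
  rw [Finset.sum_eq_single (x * h)]
  · simp
  · intro y _ hy
    rw [if_neg (Ne.symm hy)]; simp
  · simp

lemma sum_push_ite {T M N : ℕ} (pX : Matrix (Fin T) (Fin M) F → ℝ)
    (pH : Matrix (Fin M) (Fin N) F → ℝ)
    (R : Matrix (Fin T) (Fin M) F → Matrix (Fin T) (Fin N) F → Prop)
    [∀ x y, Decidable (R x y)] :
    (∑ ω : Matrix (Fin T) (Fin M) F × Matrix (Fin M) (Fin N) F,
      if R ω.1 (ω.1 * ω.2) then jointPMF pX pH ω else 0)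
      = ∑ x, ∑ y, if R x y then pX x * prXY pH x y else 0 := by
  have := sum_push pX pH (fun x y => if R x y then 1 else 0)
  simpa using this

lemma prXY_nonneg {k M N : ℕ} {pH : Matrix (Fin M) (Fin N) F → ℝ} (h : IsPMF pH)
    (X : Matrix (Fin k) (Fin M) F) (Y : Matrix (Fin k) (Fin N) F) : 0 ≤ prXY pH X Y := by
  unfold prXY
  apply Finset.sum_nonneg
  intro H _
  split_ifs
  · exact h.1 H
  · exact le_rfl

lemma prXY_sum {k M N : ℕ} {pH : Matrix (Fin M) (Fin N) F → ℝ} (h : IsPMF pH)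
    (X : Matrix (Fin k) (Fin M) F) : ∑ Y : Matrix (Fin k) (Fin N) F, prXY pH X Y = 1 := by
  unfold prXY
  rw [Finset.sum_comm, ← h.2]
  apply Finset.sum_congr rfl
  intro H _
  simp

lemma prXY_ne_zero {k M N : ℕ} {pH : Matrix (Fin M) (Fin N) F → ℝ}
    {X : Matrix (Fin k) (Fin M) F} {Y : Matrix (Fin k) (Fin N) F} (h : prXY pH X Y ≠ 0) :
    colSpace Y ≤ colSpace X := by
  unfold prXY at h
  obtain ⟨H, _, hH⟩ := Finset.exists_ne_zero_of_sum_ne_zero h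
  have : X * H = Y := by
    by_contra hne
    simp [hne] at hH
  rw [← this]
  exact colSpace_mul_le _ _

lemma prXY_gl {k M N : ℕ} (pH : Matrix (Fin M) (Fin N) F → ℝ)
    (X : Matrix (Fin k) (Fin M) F) (Y : Matrix (Fin k) (Fin N) F)
    (G G' : Matrix (Fin k) (Fin k) F) (h : G' * G = 1) :
    prXY pH (G * X) (G * Y) = prXY pH X Y := by
  unfold prXY
  apply Finset.sum_congr rfl
  intro H _
  have : G * X * H = G * Y ↔ X * H = Y := by
    constructor
    · intro e
      have e2 := congrArg (fun Z => G' * Z) e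
      simp only [← Matrix.mul_assoc, h, Matrix.one_mul] at e2
      exact e2
    · intro e
      rw [Matrix.mul_assoc, e]
  simp only [this]

/-- The output distribution is invariant on row-space classes. -/
lemma out_invariant {T M N : ℕ} (pX : Matrix (Fin T) (Fin M) F → ℝ)
    (pH : Matrix (Fin M) (Fin N) F → ℝ) (hα : IsAlphaType pX)
    (y y' : Matrix (Fin T) (Fin N) F) (h : rowSpace y = rowSpace y') :
    ∑ x, pX x * prXY pH x y' = ∑ x, pX x * prXY pH x y := by
  obtain ⟨G, G', h1, h2, rfl⟩ := exists_gl y y' h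
  let e : Matrix (Fin T) (Fin M) F ≃ Matrix (Fin T) (Fin M) F :=
    { toFun := fun x => G * x
      invFun := fun x => G' * x
      left_inv := fun x => by simp only [← Matrix.mul_assoc, h2, Matrix.one_mul]
      right_inv := fun x => by simp only [← Matrix.mul_assoc, h1, Matrix.one_mul] }
  rw [← Equiv.sum_comp e]
  apply Finset.sum_congr rfl
  intro x _
  show pX (G * x) * prXY pH (G * x) (G * y) = _
  rw [prXY_gl pH x y G G' h2, hα (G * x) x (rowSpace_gl x G G' h2)]

lemma card_row {m n : ℕ} (y : Matrix (Fin m) (Fin n) F) :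
    (Finset.univ.filter (fun y' : Matrix (Fin m) (Fin n) F => rowSpace y' = rowSpace y)).card
      = chi (Fintype.card F) m y.rank := by
  have h := card_row_col (rowSpace y) (⊤ : Submodule F (Fin m → F)) (by
    rw [finrank_rowSpace, finrank_top, Module.finrank_fin_fun]
    exact y.rank_le_height)
  rw [finrank_rowSpace, finrank_top, Module.finrank_fin_fun] at h
  rw [← h]
  simp

lemma card_row_col' {m n k : ℕ} (x : Matrix (Fin m) (Fin k) F) (y : Matrix (Fin m) (Fin n) F)
    (hr : y.rank ≤ x.rank) :
    (Finset.univ.filter (fun y' : Matrix (Fin m) (Fin n) F =>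
      rowSpace y' = rowSpace y ∧ colSpace y' ≤ colSpace x)).card
      = chi (Fintype.card F) x.rank y.rank := by
  have h := card_row_col (rowSpace y) (colSpace x) (by
    rw [finrank_rowSpace, finrank_colSpace]; exact hr)
  rwa [finrank_rowSpace, finrank_colSpace] at h

lemma rank_of_row {m n : ℕ} {y y' : Matrix (Fin m) (Fin n) F} (h : rowSpace y = rowSpace y') :
    y.rank = y'.rank := by
  rw [← finrank_rowSpace, ← finrank_rowSpace, h]

lemma rank_of_col {m n k : ℕ} {x : Matrix (Fin m) (Fin k) F} {y : Matrix (Fin m) (Fin n) F}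
    (h : colSpace y ≤ colSpace x) : y.rank ≤ x.rank := by
  rw [← finrank_colSpace, ← finrank_colSpace]
  exact Submodule.finrank_mono h

/-- Joint law of the row spaces. -/
def puv {T M N : ℕ} (pX : Matrix (Fin T) (Fin M) F → ℝ) (pH : Matrix (Fin M) (Fin N) F → ℝ)
    (x : Matrix (Fin T) (Fin M) F) (y : Matrix (Fin T) (Fin N) F) : ℝ :=
  ∑ x', ∑ y', if rowSpace x' = rowSpace x ∧ rowSpace y' = rowSpace y then
    pX x' * prXY pH x' y' else 0

/-- Comparison law. -/
def qxy {T M N : ℕ} (pX : Matrix (Fin T) (Fin M) F → ℝ) (pH : Matrix (Fin M) (Fin N) F → ℝ)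
    (x : Matrix (Fin T) (Fin M) F) (y : Matrix (Fin T) (Fin N) F) : ℝ :=
  puv pX pH x y / ((chi (Fintype.card F) T x.rank : ℝ) * (chi (Fintype.card F) x.rank y.rank : ℝ))

lemma miXY_eq {T M N : ℕ} {pX : Matrix (Fin T) (Fin M) F → ℝ} {pH : Matrix (Fin M) (Fin N) F → ℝ}
    (hpH : IsPMF pH) :
    miXY pX pH = ∑ x, ∑ y, pX x * prXY pH x y * Real.logb 2 (pX x * prXY pH x y /
      (pX x * ∑ x', pX x' * prXY pH x' y)) := by
  unfold miXY mutualInfo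
  rw [← sum_push]
  apply Finset.sum_congr rfl
  intro ω _
  congr 2
  beta_reduce
  refine congrArg₂ (· / ·) ?_ (congrArg₂ (· * ·) ?_ ?_)
  · refine Eq.trans (by congr!) ((sum_push_ite pX pH (fun x y => x = ω.1 ∧ y = ω.1 * ω.2)).trans ?_)
    rw [Finset.sum_eq_single ω.1]
    · simp
    · intro x _ hx
      simp [hx]
    · simp
  · refine Eq.trans (by congr!) ((sum_push_ite pX pH (fun x y => x = ω.1)).trans ?_)
    rw [Finset.sum_eq_single ω.1]
    · simp [← Finset.mul_sum, prXY_sum hpH]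
    · intro x _ hx
      simp [hx]
    · simp
  · refine Eq.trans (by congr!) ((sum_push_ite pX pH (fun x y => y = ω.1 * ω.2)).trans ?_)
    simp

lemma miRowRow_eq {T M N : ℕ} {pX : Matrix (Fin T) (Fin M) F → ℝ}
    {pH : Matrix (Fin M) (Fin N) F → ℝ} (hpH : IsPMF pH) (hα : IsAlphaType pX) :
    miRowRow pX pH = ∑ x, ∑ y, pX x * prXY pH x y * Real.logb 2 (puv pX pH x y /
      ((chi (Fintype.card F) T x.rank * pX x) *
        (chi (Fintype.card F) T y.rank * ∑ x', pX x' * prXY pH x' y))) := by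
  unfold miRowRow mutualInfo
  rw [← sum_push]
  apply Finset.sum_congr rfl
  intro ω _
  congr 2
  beta_reduce
  refine congrArg₂ (· / ·) ?_ (congrArg₂ (· * ·) ?_ ?_)
  · refine Eq.trans (by congr!) ((sum_push_ite pX pH (fun x y => rowSpace x = rowSpace ω.1 ∧ rowSpace y = rowSpace (ω.1 * ω.2))).trans ?_)
    rfl
  · refine Eq.trans (by congr!) ((sum_push_ite pX pH (fun x y => rowSpace x = rowSpace ω.1)).trans ?_)
    rw [← card_row, ← nsmul_eq_mul, ← Finset.sum_const, Finset.sum_filter]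
    apply Finset.sum_congr rfl
    intro x _
    split_ifs with h
    · rw [← Finset.mul_sum, prXY_sum hpH, mul_one, hα _ _ h]
    · simp
  · refine Eq.trans (by congr!) ((sum_push_ite pX pH (fun x y => rowSpace y = rowSpace (ω.1 * ω.2))).trans ?_)
    rw [← card_row, ← nsmul_eq_mul, ← Finset.sum_const, Finset.sum_filter, Finset.sum_comm]
    apply Finset.sum_congr rfl
    intro y _
    split_ifs with h
    · exact out_invariant pX pH hα _ _ h.symm
    · simp

lemma Jrank_eq {T M N : ℕ} (q : ℕ) {pX : Matrix (Fin T) (Fin M) F → ℝ}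
    {pH : Matrix (Fin M) (Fin N) F → ℝ} :
    Jrank q pX pH = ∑ x, ∑ y, pX x * prXY pH x y *
      Real.logb 2 ((chi q T y.rank : ℝ) / (chi q x.rank y.rank : ℝ)) := by
  rw [← sum_push pX pH (fun x y => Real.logb 2 ((chi q T y.rank : ℝ) / (chi q x.rank y.rank : ℝ)))]
  unfold Jrank prRankXY
  simp only [Finset.sum_mul]
  have h1 : ∀ r, ∑ s ∈ Finset.range (T + 1),
      ∑ ω : Matrix (Fin T) (Fin M) F × Matrix (Fin M) (Fin N) F,
      (if ω.1.rank = r ∧ (ω.1 * ω.2).rank = s then jointPMF pX pH ω else 0) *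
        Real.logb 2 ((chi q T s : ℝ) / (chi q r s : ℝ)) =
      ∑ ω : Matrix (Fin T) (Fin M) F × Matrix (Fin M) (Fin N) F, ∑ s ∈ Finset.range (T + 1),
      (if ω.1.rank = r ∧ (ω.1 * ω.2).rank = s then jointPMF pX pH ω else 0) *
        Real.logb 2 ((chi q T s : ℝ) / (chi q r s : ℝ)) := fun r => Finset.sum_comm
  simp only [h1]
  rw [Finset.sum_comm]
  apply Finset.sum_congr rfl
  intro ω _
  have hx : ω.1.rank ∈ Finset.range (T + 1) :=
    Finset.mem_range.2 (Nat.lt_succ_of_le ω.1.rank_le_height)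
  have hy : (ω.1 * ω.2).rank ∈ Finset.range (T + 1) :=
    Finset.mem_range.2 (Nat.lt_succ_of_le (ω.1 * ω.2).rank_le_height)
  rw [Finset.sum_eq_single_of_mem _ hx, Finset.sum_eq_single_of_mem _ hy]
  · simp
  · intro s _ hs
    simp [hs.symm]
  · intro r _ hr
    simp [hr.symm]

lemma two_le_card : 2 ≤ Fintype.card F := Fintype.one_lt_card

lemma joint_sum {T M N : ℕ} {pX : Matrix (Fin T) (Fin M) F → ℝ} {pH : Matrix (Fin M) (Fin N) F → ℝ}
    (hpH : IsPMF pH) (hpX : IsPMF pX) : ∑ x, ∑ y, pX x * prXY pH x y = 1 := by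
  simp only [← Finset.mul_sum, prXY_sum hpH, mul_one, hpX.2]

lemma puv_nonneg {T M N : ℕ} {pX : Matrix (Fin T) (Fin M) F → ℝ}
    {pH : Matrix (Fin M) (Fin N) F → ℝ} (hpH : IsPMF pH) (hpX : IsPMF pX)
    (x : Matrix (Fin T) (Fin M) F) (y : Matrix (Fin T) (Fin N) F) :
    0 ≤ puv pX pH x y := by
  unfold puv
  refine Finset.sum_nonneg fun x _ => Finset.sum_nonneg fun y _ => ?_
  split_ifs
  · exact mul_nonneg (hpX.1 x) (prXY_nonneg hpH x y)
  · exact le_rfl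

lemma puv_ge {T M N : ℕ} {pX : Matrix (Fin T) (Fin M) F → ℝ}
    {pH : Matrix (Fin M) (Fin N) F → ℝ} (hpH : IsPMF pH) (hpX : IsPMF pX)
    (x : Matrix (Fin T) (Fin M) F) (y : Matrix (Fin T) (Fin N) F) :
    pX x * prXY pH x y ≤ puv pX pH x y := by
  unfold puv
  have h0 : ∀ x' y', (0 : ℝ) ≤ if rowSpace x' = rowSpace x ∧ rowSpace y' = rowSpace y then
      pX x' * prXY pH x' y' else 0 := by
    intro x' y'
    split_ifs
    · exact mul_nonneg (hpX.1 _) (prXY_nonneg hpH _ _)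
    · exact le_rfl
  refine le_trans ?_ (Finset.single_le_sum (fun x' _ => Finset.sum_nonneg fun y' _ => h0 x' y')
    (Finset.mem_univ x))
  refine le_trans ?_ (Finset.single_le_sum (fun y' _ => h0 x y') (Finset.mem_univ y))
  simp

/-- Total mass of the comparison law. -/
lemma qxy_sum {T M N : ℕ} {pX : Matrix (Fin T) (Fin M) F → ℝ}
    {pH : Matrix (Fin M) (Fin N) F → ℝ} (hpH : IsPMF pH) (hpX : IsPMF pX) :
    (∑ x : Matrix (Fin T) (Fin M) F, ∑ y : Matrix (Fin T) (Fin N) F,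
      if colSpace y ≤ colSpace x then qxy pX pH x y else 0) = 1 := by
  rw [← joint_sum hpH hpX]
  let q := Fintype.card F
  have h1 : ∀ (x : Matrix (Fin T) (Fin M) F) (y : Matrix (Fin T) (Fin N) F),
      (if colSpace y ≤ colSpace x then qxy pX pH x y else 0) =
      ∑ x', ∑ y', (pX x' * prXY pH x' y') * ((if rowSpace x = rowSpace x' then
        1 / (chi q T x'.rank : ℝ) else 0) * (if rowSpace y = rowSpace y' ∧ colSpace y ≤ colSpace x
          then 1 / (chi q x'.rank y'.rank : ℝ) else 0)) := by
    intro x y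
    by_cases hc : colSpace y ≤ colSpace x
    · rw [if_pos hc]
      unfold qxy puv
      rw [Finset.sum_div]
      apply Finset.sum_congr rfl
      intro x' _
      rw [Finset.sum_div]
      apply Finset.sum_congr rfl
      intro y' _
      by_cases hx : rowSpace x' = rowSpace x
      · by_cases hy : rowSpace y' = rowSpace y
        · rw [if_pos ⟨hx, hy⟩, if_pos hx.symm, if_pos ⟨hy.symm, hc⟩, rank_of_row hx, rank_of_row hy]
          rw [div_mul_div_comm, one_mul, mul_one_div]
        · rw [if_neg (fun h => hy h.2), if_neg (c := rowSpace y = rowSpace y' ∧ colSpace y ≤ colSpace x)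
            (fun h => hy h.1.symm)]; simp
      · rw [if_neg (fun h => hx h.1), if_neg (fun h => hx h.symm)]; simp
    · simp [hc]
  simp only [h1]
  have hswap : ∀ g : Matrix (Fin T) (Fin M) F → Matrix (Fin T) (Fin N) F →
      Matrix (Fin T) (Fin M) F → Matrix (Fin T) (Fin N) F → ℝ,
      ∑ x, ∑ y, ∑ x', ∑ y', g x y x' y' = ∑ x', ∑ y', ∑ x, ∑ y, g x y x' y' := by
    intro g
    have := Finset.sum_comm (s := (Finset.univ : Finset (Matrix (Fin T) (Fin M) F × Matrix (Fin T) (Fin N) F)))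
      (t := (Finset.univ : Finset (Matrix (Fin T) (Fin M) F × Matrix (Fin T) (Fin N) F)))
      (f := fun a b => g a.1 a.2 b.1 b.2)
    simpa only [Fintype.sum_prod_type] using this
  rw [hswap]
  apply Finset.sum_congr rfl
  intro x' _
  apply Finset.sum_congr rfl
  intro y' _
  by_cases hz : prXY pH x' y' = 0
  · simp [hz]
  have hrank := rank_of_col (prXY_ne_zero hz)
  simp only [← Finset.mul_sum]
  have hy : ∀ x : Matrix (Fin T) (Fin M) F, (if rowSpace x = rowSpace x' then
        1 / (chi q T x'.rank : ℝ) else 0) *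
      (∑ y : Matrix (Fin T) (Fin N) F, (if rowSpace y = rowSpace y' ∧ colSpace y ≤ colSpace x
          then 1 / (chi q x'.rank y'.rank : ℝ) else 0)) = (if rowSpace x = rowSpace x' then
        1 / (chi q T x'.rank : ℝ) else 0) := by
    intro x
    split_ifs with hx
    · rw [← Finset.sum_filter, Finset.sum_const, nsmul_eq_mul, card_row_col' x y'
        (by rw [rank_of_row hx]; exact hrank), rank_of_row hx]
      have : (0 : ℝ) < chi q x'.rank y'.rank := by exact_mod_cast chi_pos two_le_card hrank
      have h2 : (chi (Fintype.card F) x'.rank y'.rank : ℝ) * (1 / (chi q x'.rank y'.rank : ℝ)) = 1 :=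
        mul_one_div_cancel this.ne'
      rw [h2, mul_one]
    · simp
  simp only [hy]
  rw [← Finset.sum_filter, Finset.sum_const, nsmul_eq_mul, card_row]
  have : (0 : ℝ) < chi q T x'.rank := by exact_mod_cast chi_pos two_le_card x'.rank_le_height
  rw [mul_one_div, div_self this.ne', mul_one]

lemma puv_symm {T M N : ℕ} {pX : Matrix (Fin T) (Fin M) F → ℝ}
    {pH : Matrix (Fin M) (Fin N) F → ℝ} (hα : IsAlphaType pX)
    (hsym : RowSpaceSymmetric T pH)
    (x : Matrix (Fin T) (Fin M) F) (y : Matrix (Fin T) (Fin N) F) (hc : colSpace y ≤ colSpace x) :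
    puv pX pH x y = (chi (Fintype.card F) T x.rank : ℝ) * (chi (Fintype.card F) x.rank y.rank : ℝ)
      * (pX x * prXY pH x y) := by
  have hrank := rank_of_col hc
  unfold puv
  rw [← card_row, mul_assoc, ← nsmul_eq_mul, ← Finset.sum_const, Finset.sum_filter]
  apply Finset.sum_congr rfl
  intro x' _
  by_cases hx : rowSpace x' = rowSpace x
  · rw [if_pos hx, ← rank_of_row hx, ← card_row_col' x' y (by rw [rank_of_row hx]; exact hrank),
      ← nsmul_eq_mul, ← Finset.sum_const, Finset.sum_filter]
    apply Finset.sum_congr rfl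
    intro y' _
    by_cases hy : rowSpace y' = rowSpace y
    · by_cases hc' : colSpace y' ≤ colSpace x'
      · rw [if_pos ⟨hx, hy⟩, if_pos ⟨hy, hc'⟩, hα _ _ hx, hsym x' x y' y hc' hc hx hy]
      · rw [if_pos ⟨hx, hy⟩, if_neg (fun h => hc' h.2)]
        have : prXY pH x' y' = 0 := by
          by_contra h
          exact hc' (prXY_ne_zero h)
        rw [this, mul_zero]
    · rw [if_neg (fun h => hy h.2), if_neg (fun h => hy h.1)]
  · rw [if_neg hx]
    simp [hx]

/-- The difference of the two sides as a divergence. -/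
lemma diff_eq {T M N : ℕ} {pX : Matrix (Fin T) (Fin M) F → ℝ}
    {pH : Matrix (Fin M) (Fin N) F → ℝ} (hpH : IsPMF pH) (hpX : IsPMF pX) (hα : IsAlphaType pX) :
    miXY pX pH - (Jrank (Fintype.card F) pX pH + miRowRow pX pH) =
      ∑ x, ∑ y, pX x * prXY pH x y * Real.logb 2 (pX x * prXY pH x y / qxy pX pH x y) := by
  rw [miXY_eq hpH, miRowRow_eq hpH hα, Jrank_eq, ← Finset.sum_add_distrib, ← Finset.sum_sub_distrib]
  apply Finset.sum_congr rfl
  intro x _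
  rw [← Finset.sum_add_distrib, ← Finset.sum_sub_distrib]
  apply Finset.sum_congr rfl
  intro y _
  rw [← mul_add, ← mul_sub]
  by_cases hz : pX x * prXY pH x y = 0
  · rw [hz]; simp
  congr 1
  have hJ : 0 < pX x * prXY pH x y :=
    lt_of_le_of_ne (mul_nonneg (hpX.1 x) (prXY_nonneg hpH x y)) (Ne.symm hz)
  have hx : pX x ≠ 0 := left_ne_zero_of_mul hz
  have hp : prXY pH x y ≠ 0 := right_ne_zero_of_mul hz
  have hrank := rank_of_col (prXY_ne_zero hp)
  have hc1 : (chi (Fintype.card F) T x.rank : ℝ) ≠ 0 := by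
    exact_mod_cast (chi_pos two_le_card x.rank_le_height).ne'
  have hc2 : (chi (Fintype.card F) T y.rank : ℝ) ≠ 0 := by
    exact_mod_cast (chi_pos two_le_card y.rank_le_height).ne'
  have hc3 : (chi (Fintype.card F) x.rank y.rank : ℝ) ≠ 0 := by
    exact_mod_cast (chi_pos two_le_card hrank).ne'
  have hU : puv pX pH x y ≠ 0 := (hJ.trans_le (puv_ge hpH hpX x y)).ne'
  have hY : (∑ x', pX x' * prXY pH x' y) ≠ 0 := by
    refine (hJ.trans_le ?_).ne'
    exact Finset.single_le_sum (f := fun x' => pX x' * prXY pH x' y)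
      (fun x' _ => mul_nonneg (hpX.1 x') (prXY_nonneg hpH x' y)) (Finset.mem_univ x)
  unfold qxy
  generalize (∑ x', pX x' * prXY pH x' y) = S at *
  rw [← Real.logb_mul (by positivity) (by positivity), ← Real.logb_div (by positivity) (by positivity)]
  congr 1
  field_simp

lemma gibbs {T M N : ℕ} {pX : Matrix (Fin T) (Fin M) F → ℝ}
    {pH : Matrix (Fin M) (Fin N) F → ℝ} (hpH : IsPMF pH) (hpX : IsPMF pX) :
    0 ≤ ∑ x, ∑ y, pX x * prXY pH x y * Real.logb 2 (pX x * prXY pH x y / qxy pX pH x y) := by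
  have hl2 : 0 < Real.log 2 := Real.log_pos (by norm_num)
  have key : ∀ (x : Matrix (Fin T) (Fin M) F) (y : Matrix (Fin T) (Fin N) F),
      (pX x * prXY pH x y - if colSpace y ≤ colSpace x then qxy pX pH x y else 0) / Real.log 2 ≤
      pX x * prXY pH x y * Real.logb 2 (pX x * prXY pH x y / qxy pX pH x y) := by
    intro x y
    have hq0 : 0 ≤ qxy pX pH x y := div_nonneg (puv_nonneg hpH hpX x y) (by positivity)
    by_cases hz : pX x * prXY pH x y = 0
    · rw [hz, zero_mul]
      apply div_nonpos_of_nonpos_of_nonneg _ hl2.le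
      split_ifs <;> linarith
    have hJ : 0 < pX x * prXY pH x y :=
      lt_of_le_of_ne (mul_nonneg (hpX.1 x) (prXY_nonneg hpH x y)) (Ne.symm hz)
    have hp : prXY pH x y ≠ 0 := right_ne_zero_of_mul hz
    have hc := prXY_ne_zero hp
    have hrank := rank_of_col hc
    have hc1 : 0 < (chi (Fintype.card F) T x.rank : ℝ) := by
      exact_mod_cast (chi_pos two_le_card x.rank_le_height)
    have hc3 : 0 < (chi (Fintype.card F) x.rank y.rank : ℝ) := by
      exact_mod_cast (chi_pos two_le_card hrank)
    have hQ : 0 < qxy pX pH x y :=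
      div_pos (hJ.trans_le (puv_ge hpH hpX x y)) (mul_pos hc1 hc3)
    rw [if_pos hc]
    generalize pX x * prXY pH x y = a at *
    generalize qxy pX pH x y = b at *
    unfold Real.logb
    rw [← mul_div_assoc]
    apply div_le_div_of_nonneg_right _ hl2.le
    have h1 := Real.one_sub_inv_le_log_of_pos (div_pos hJ hQ)
    calc a - b = a * (1 - (a / b)⁻¹) := by field_simp
      _ ≤ _ := mul_le_mul_of_nonneg_left h1 hJ.le
  refine le_trans (le_of_eq ?_) (Finset.sum_le_sum fun x _ => Finset.sum_le_sum fun y _ => key x y)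
  simp only [← Finset.sum_div, Finset.sum_sub_distrib]
  rw [joint_sum hpH hpX, qxy_sum hpH hpX]
  simp

/-- for an α-type input, I(X;Y) ≥ J(rank X; rank Y) + I(⟨X^T⟩;⟨Y^T⟩),
with equality if the LOC is row-space symmetric. -/
theorem alpha_type_lower_bound
    {F : Type} [Field F] [Fintype F] (q T M N : ℕ) (hq : Fintype.card F = q)
    (pH : Matrix (Fin M) (Fin N) F → ℝ) (hpH : IsPMF pH)
    (pX : Matrix (Fin T) (Fin M) F → ℝ) (hpX : IsPMF pX) (hα : IsAlphaType pX) :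
    Jrank q pX pH + miRowRow pX pH ≤ miXY pX pH
    ∧ (RowSpaceSymmetric T pH →
        miXY pX pH = Jrank q pX pH + miRowRow pX pH) := by
  subst hq
  have hd := diff_eq hpH hpX hα
  have hg := gibbs hpH hpX
  refine ⟨by linarith, fun hsym => ?_⟩
  suffices h : ∑ x, ∑ y, pX x * prXY pH x y *
      Real.logb 2 (pX x * prXY pH x y / qxy pX pH x y) = 0 by linarith
  apply Finset.sum_eq_zero
  intro x _
  apply Finset.sum_eq_zero
  intro y _
  by_cases hz : pX x * prXY pH x y = 0
  · rw [hz, zero_mul]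
  have hc := prXY_ne_zero (right_ne_zero_of_mul hz)
  have hrank := rank_of_col hc
  have hc1 : (chi (Fintype.card F) T x.rank : ℝ) ≠ 0 := by
    exact_mod_cast (chi_pos two_le_card x.rank_le_height).ne'
  have hc3 : (chi (Fintype.card F) x.rank y.rank : ℝ) ≠ 0 := by
    exact_mod_cast (chi_pos two_le_card hrank).ne'
  unfold qxy
  rw [puv_symm hα hsym x y hc, mul_div_cancel_left₀ _ (mul_ne_zero hc1 hc3), div_self hz,
    Real.logb_one, mul_zero]

end
end

section
/- For LOC(H,T) with any α-type input distribution, I(X;Y) ≤ J(rank(X);rank(Y)) + I(⟨X^T⟩;⟨Y^T⟩) + ∑_{r,s} Pr{rank(X)=r, rank(Y)=s} · log₂ χ_r[s], where Y = XH. -/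
open scoped Classical
open Finset Matrix Module

noncomputable section

variable {F : Type} [Field F] [Fintype F]

theorem aux_equiv {V W : Type*} [AddCommGroup V] [Module F V] [FiniteDimensional F V]
    [AddCommGroup W] [Module F W] (f g : V →ₗ[F] W)
    (h : LinearMap.range f = LinearMap.range g) : ∃ e : V ≃ₗ[F] V, ∀ x, g (e x) = f x := by
  obtain ⟨C, hC⟩ := Submodule.exists_isCompl (LinearMap.ker f)
  obtain ⟨D, hD⟩ := Submodule.exists_isCompl (LinearMap.ker g)
  have hk : finrank F (LinearMap.ker f) = finrank F (LinearMap.ker g) := by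
    have h1 := f.finrank_range_add_finrank_ker
    have h2 := g.finrank_range_add_finrank_ker
    rw [h] at h1
    omega
  let k : LinearMap.ker f ≃ₗ[F] LinearMap.ker g := LinearEquiv.ofFinrankEq _ _ hk
  let c : C ≃ₗ[F] D := (f.kerComplementEquivRange hC.symm) ≪≫ₗ (LinearEquiv.ofEq _ _ h) ≪≫ₗ
    (g.kerComplementEquivRange hD.symm).symm
  have hc : ∀ x : C, g (c x) = f x := by
    intro x
    have h1 : g.kerComplementEquivRange hD.symm (c x) =
      LinearEquiv.ofEq _ _ h (f.kerComplementEquivRange hC.symm x) :=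
      LinearEquiv.apply_symm_apply _ _
    have h2 := congrArg Subtype.val h1
    simpa using h2
  refine ⟨(Submodule.prodEquivOfIsCompl _ _ hC).symm ≪≫ₗ (k.prodCongr c) ≪≫ₗ
    (Submodule.prodEquivOfIsCompl _ _ hD), fun x => ?_⟩
  obtain ⟨⟨a, b⟩, rfl⟩ := (Submodule.prodEquivOfIsCompl _ _ hC).surjective x
  have h1 := (k a).2
  have h2 := a.2
  rw [LinearMap.mem_ker] at h1 h2
  simp [hc, h1, h2]

theorem aux_exists_unit {T N : ℕ} (y y' : Matrix (Fin T) (Fin N) F)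
    (h : rowSpace y = rowSpace y') :
    ∃ P Q : Matrix (Fin T) (Fin T) F, P * Q = 1 ∧ Q * P = 1 ∧ P * y' = y := by
  obtain ⟨e, he⟩ := aux_equiv yᵀ.mulVecLin y'ᵀ.mulVecLin h
  let A := LinearMap.toMatrix' e.toLinearMap
  let B := LinearMap.toMatrix' e.symm.toLinearMap
  have hAB : A * B = 1 := by
    rw [← LinearMap.toMatrix'_comp]
    simp
  have hBA : B * A = 1 := by
    rw [← LinearMap.toMatrix'_comp]
    simp
  refine ⟨Aᵀ, Bᵀ, ?_, ?_, ?_⟩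
  · rw [← Matrix.transpose_mul, hBA, Matrix.transpose_one]
  · rw [← Matrix.transpose_mul, hAB, Matrix.transpose_one]
  · apply Matrix.transpose_injective
    rw [Matrix.transpose_mul, Matrix.transpose_transpose]
    have : (y'ᵀ * A).mulVecLin = yᵀ.mulVecLin := by
      ext1 x
      rw [Matrix.mulVecLin_mul]
      ext i
      simp only [LinearMap.comp_apply]
      rw [← he]
      have h3 : A *ᵥ (Pi.single x 1) = e (Pi.single x 1) := LinearMap.toMatrix'_mulVec _ _
      simp only [LinearMap.coe_single, Matrix.mulVecLin_apply, h3]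
    exact Matrix.toLin'.injective (by simpa [Matrix.toLin'_apply'] using this)

theorem aux_rowSpace_mul {k T N : ℕ} (P : Matrix (Fin k) (Fin T) F)
    (y : Matrix (Fin T) (Fin N) F) : rowSpace (P * y) ≤ rowSpace y := by
  unfold rowSpace colSpace
  rw [Matrix.transpose_mul, Matrix.mulVecLin_mul]
  exact LinearMap.range_comp_le_range _ _

theorem aux_rowSpace_unit {T N : ℕ} (P Q : Matrix (Fin T) (Fin T) F) (h : Q * P = 1)
    (y : Matrix (Fin T) (Fin N) F) : rowSpace (P * y) = rowSpace y := by
  apply le_antisymm (aux_rowSpace_mul P y)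
  have := aux_rowSpace_mul Q (P * y)
  rwa [← Matrix.mul_assoc, h, Matrix.one_mul] at this

theorem aux_finrank_rowSpace {T N : ℕ} (y : Matrix (Fin T) (Fin N) F) :
    finrank F (rowSpace y) = y.rank := by
  rw [← Matrix.rank_transpose]; rfl

theorem aux_row_mem {T N : ℕ} (y : Matrix (Fin T) (Fin N) F) (i : Fin T) :
    y i ∈ rowSpace y := by
  unfold rowSpace colSpace
  rw [Matrix.range_mulVecLin]
  exact Submodule.subset_span ⟨i, rfl⟩

theorem aux_card {T N : ℕ} (y : Matrix (Fin T) (Fin N) F) :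
    (Finset.univ.filter (fun y' : Matrix (Fin T) (Fin N) F => rowSpace y' = rowSpace y)).card
      ≤ chi (Fintype.card F) T y.rank := by
  have hs : finrank F (rowSpace y) = y.rank := aux_finrank_rowSpace y
  let b : Basis (Fin y.rank) F (rowSpace y) := (Module.finBasis F (rowSpace y)).reindex (finCongr hs)
  let B : Matrix (Fin y.rank) (Fin N) F := fun j => (b j : Fin N → F)
  have hex : ∀ y' : {y' : Matrix (Fin T) (Fin N) F // rowSpace y' = rowSpace y},
      ∃ A : Matrix (Fin T) (Fin y.rank) F, A * B = y'.1 := by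
    rintro ⟨y', hy'⟩
    have hm : ∀ i, y' i ∈ rowSpace y := fun i => hy' ▸ aux_row_mem y' i
    refine ⟨Matrix.of (fun i j => b.repr ⟨y' i, hm i⟩ j), ?_⟩
    ext i n
    have h1 := congrArg Subtype.val (b.sum_repr ⟨y' i, hm i⟩)
    have h2 := congrFun h1 n
    rw [Matrix.mul_apply]
    refine Eq.trans ?_ h2
    simp only [AddSubmonoidClass.coe_finset_sum, Submodule.coe_smul, Finset.sum_apply,
      Pi.smul_apply, smul_eq_mul]
    rfl
  choose A hA using hex
  have hli : ∀ y', LinearIndependent F (A y').col := by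
    intro y'
    rw [linearIndependent_iff_card_le_finrank_span, Fintype.card_fin]
    show _ ≤ finrank F (Submodule.span F (Set.range (A y').col))
    rw [← Matrix.rank_eq_finrank_span_cols]
    have h1 := Matrix.rank_mul_le_left (A y') B
    rw [hA, ← aux_finrank_rowSpace, y'.2, hs] at h1
    exact h1
  have hinj : Function.Injective (fun y' => (⟨(A y').col, hli y'⟩ :
      { s : Fin y.rank → (Fin T → F) // LinearIndependent F s })) := by
    intro y1 y2 h12
    have h3 : (A y1).col = (A y2).col := congrArg Subtype.val h12
    have h4 : A y1 = A y2 := by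
      ext i j
      exact congrFun (congrFun h3 j) i
    apply Subtype.ext
    rw [← hA y1, ← hA y2, h4]
  have h5 := Nat.card_le_card_of_injective _ hinj
  rw [card_linearIndependent (by simpa using y.rank_le_height)] at h5
  rw [← Fintype.card_subtype, ← Nat.card_eq_fintype_card]
  refine h5.trans (le_of_eq ?_)
  unfold chi
  rw [Finset.prod_range]
  simp

theorem aux_chi_pos (q m r : ℕ) (hq : 1 < q) (h : r ≤ m) : 0 < chi q m r := by
  unfold chi
  apply Finset.prod_pos
  intro i hi
  have := Nat.pow_lt_pow_right hq (lt_of_lt_of_le (Finset.mem_range.mp hi) h)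
  omega

theorem aux_collapse {T M N : ℕ} (pX : Matrix (Fin T) (Fin M) F → ℝ)
    (pH : Matrix (Fin M) (Fin N) F → ℝ) (g : ℕ → ℕ → ℝ) :
    ∑ r ∈ Finset.range (T + 1), ∑ s ∈ Finset.range (T + 1), prRankXY pX pH r s * g r s
      = ∑ ω : Matrix (Fin T) (Fin M) F × Matrix (Fin M) (Fin N) F,
        jointPMF pX pH ω * g ω.1.rank (ω.1 * ω.2).rank := by
  have hr : ∀ {n : ℕ} (x : Matrix (Fin T) (Fin n) F), x.rank ∈ Finset.range (T + 1) := by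
    intro n x
    have := x.rank_le_height
    exact Finset.mem_range.mpr (by omega)
  unfold prRankXY
  simp_rw [Finset.sum_mul]
  simp_rw [fun r => Finset.sum_comm (s := Finset.range (T + 1))
    (t := (Finset.univ : Finset (Matrix (Fin T) (Fin M) F × Matrix (Fin M) (Fin N) F)))
    (f := fun s ω => (if ω.1.rank = r ∧ (ω.1 * ω.2).rank = s then jointPMF pX pH ω else 0) * g r s)]
  rw [Finset.sum_comm]
  refine Finset.sum_congr rfl fun ω _ => ?_
  rw [Finset.sum_eq_single_of_mem _ (hr ω.1), Finset.sum_eq_single_of_mem _ (hr (ω.1 * ω.2))]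
  · simp
  · intro s _ hs
    rw [if_neg (fun h => hs h.2.symm), zero_mul]
  · intro r _ hr'
    apply Finset.sum_eq_zero
    intro s _
    rw [if_neg (fun h => hr' h.1.symm), zero_mul]

theorem aux_mi {Ω A B : Type*} [Fintype Ω] [DecidableEq A] [DecidableEq B]
    (p : Ω → ℝ) (f : Ω → A) (g : Ω → B) : mutualInfo p f g =
  ∑ ω : Ω, p ω * Real.logb 2
    ((∑ ω' : Ω, if f ω' = f ω ∧ g ω' = g ω then p ω' else 0) /
      ((∑ ω' : Ω, if f ω' = f ω then p ω' else 0) *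
        (∑ ω' : Ω, if g ω' = g ω then p ω' else 0))) := by
  unfold mutualInfo
  congr!

/-- The law of the output. -/
def auxPY {T M N : ℕ} (pX : Matrix (Fin T) (Fin M) F → ℝ)
    (pH : Matrix (Fin M) (Fin N) F → ℝ) (y : Matrix (Fin T) (Fin N) F) : ℝ :=
  ∑ ω : Matrix (Fin T) (Fin M) F × Matrix (Fin M) (Fin N) F,
    if ω.1 * ω.2 = y then jointPMF pX pH ω else 0

theorem aux_PY_eq {T M N : ℕ} (pX : Matrix (Fin T) (Fin M) F → ℝ)
    (pH : Matrix (Fin M) (Fin N) F → ℝ) (hα : IsAlphaType pX)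
    (y y' : Matrix (Fin T) (Fin N) F) (h : rowSpace y = rowSpace y') :
    auxPY pX pH y = auxPY pX pH y' := by
  obtain ⟨P, Q, hPQ, hQP, hy⟩ := aux_exists_unit y y' h
  have hy' : Q * y = y' := by rw [← hy, ← Matrix.mul_assoc, hQP, Matrix.one_mul]
  let e : Matrix (Fin T) (Fin M) F ≃ Matrix (Fin T) (Fin M) F :=
    { toFun := fun x => Q * x
      invFun := fun x => P * x
      left_inv := fun x => by simp [← Matrix.mul_assoc, hPQ]
      right_inv := fun x => by simp [← Matrix.mul_assoc, hQP] }
  unfold auxPY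
  refine Fintype.sum_equiv (e.prodCongr (Equiv.refl _)) _ _ ?_
  rintro ⟨x, Hm⟩
  have h1 : pX (Q * x) = pX x := hα _ _ (aux_rowSpace_unit Q P hPQ x)
  have h2 : Q * x * Hm = y' ↔ x * Hm = y := by
    constructor
    · intro h3
      rw [← hy, ← h3, ← Matrix.mul_assoc, ← Matrix.mul_assoc, hPQ, Matrix.one_mul]
    · intro h3
      rw [Matrix.mul_assoc, h3, hy']
  simp [e, jointPMF, h1, h2]

theorem aux_PV_le {T M N : ℕ} (pX : Matrix (Fin T) (Fin M) F → ℝ)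
    (pH : Matrix (Fin M) (Fin N) F → ℝ) (hα : IsAlphaType pX)
    (h0 : ∀ ω, 0 ≤ jointPMF pX pH ω) (y : Matrix (Fin T) (Fin N) F) :
    (∑ ω : Matrix (Fin T) (Fin M) F × Matrix (Fin M) (Fin N) F,
      if rowSpace (ω.1 * ω.2) = rowSpace y then jointPMF pX pH ω else 0)
      ≤ chi (Fintype.card F) T y.rank * auxPY pX pH y := by
  have h1 : (∑ ω : Matrix (Fin T) (Fin M) F × Matrix (Fin M) (Fin N) F,
      if rowSpace (ω.1 * ω.2) = rowSpace y then jointPMF pX pH ω else 0)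
      = ∑ y' ∈ Finset.univ.filter
          (fun y' : Matrix (Fin T) (Fin N) F => rowSpace y' = rowSpace y), auxPY pX pH y' := by
    unfold auxPY
    rw [Finset.sum_comm]
    refine Finset.sum_congr rfl fun ω _ => ?_
    rw [Finset.sum_ite_eq]
    simp
  rw [h1, Finset.sum_congr rfl (fun y' hy' =>
    aux_PY_eq pX pH hα y' y (Finset.mem_filter.mp hy').2), Finset.sum_const, nsmul_eq_mul]
  have h2 : 0 ≤ auxPY pX pH y := Finset.sum_nonneg fun ω _ => by
    split_ifs
    · exact h0 ω
    · exact le_rfl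
  exact mul_le_mul_of_nonneg_right (by exact_mod_cast aux_card y) h2

/-- for an α-type input,
I(X;Y) ≤ J(rank X; rank Y) + I(⟨X^T⟩;⟨Y^T⟩) + ∑_{r,s} Pr{rank X = r, rank Y = s} log₂ χ_r[s]. -/
theorem alpha_type_upper_bound
    {F : Type} [Field F] [Fintype F] (q T M N : ℕ) (hq : Fintype.card F = q)
    (pH : Matrix (Fin M) (Fin N) F → ℝ) (hpH : IsPMF pH)
    (pX : Matrix (Fin T) (Fin M) F → ℝ) (hpX : IsPMF pX) (hα : IsAlphaType pX) :
    miXY pX pH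
      ≤ Jrank q pX pH + miRowRow pX pH
        + ∑ r ∈ Finset.range (T + 1), ∑ s ∈ Finset.range (T + 1),
            prRankXY pX pH r s * Real.logb 2 (chi q r s : ℝ) := by
  have h0 : ∀ ω, 0 ≤ jointPMF pX pH ω := fun ω => mul_nonneg (hpX.1 _) (hpH.1 _)
  have hq1 : 1 < q := hq ▸ Fintype.one_lt_card
  unfold Jrank
  rw [aux_collapse pX pH (fun r s => Real.logb 2 ((chi q T s : ℝ) / (chi q r s : ℝ))),
    aux_collapse pX pH (fun r s => Real.logb 2 (chi q r s : ℝ))]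
  unfold miXY miRowRow
  rw [aux_mi, aux_mi]
  rw [← Finset.sum_add_distrib, ← Finset.sum_add_distrib]
  refine Finset.sum_le_sum ?_
  rintro ⟨x, Hm⟩ -
  rcases (h0 (x, Hm)).eq_or_lt with hz | hpos
  · rw [← hz]; simp
  rw [← mul_add, ← mul_add]
  refine mul_le_mul_of_nonneg_left ?_ hpos.le
  dsimp only
  have hx0 : 0 < pX x := by
    rcases (hpX.1 x).eq_or_lt with h | h
    · simp [jointPMF, ← h] at hpos
    · exact h
  have hyT : (x * Hm).rank ≤ T := (x * Hm).rank_le_height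
  have hyx : (x * Hm).rank ≤ x.rank := Matrix.rank_mul_le_left x Hm
  have hc1 : (0 : ℝ) < chi q T (x * Hm).rank := by exact_mod_cast aux_chi_pos q T _ hq1 hyT
  have hc2 : (0 : ℝ) < chi q x.rank (x * Hm).rank := by
    exact_mod_cast aux_chi_pos q _ _ hq1 hyx
  -- the conditional probabilities
  set a : ℝ := ∑ K : Matrix (Fin M) (Fin N) F, if x * K = x * Hm then pH K else 0 with ha
  set b : ℝ := ∑ K : Matrix (Fin M) (Fin N) F,
    if rowSpace (x * K) = rowSpace (x * Hm) then pH K else 0 with hb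
  set u : ℝ := ∑ x' : Matrix (Fin T) (Fin M) F,
    if rowSpace x' = rowSpace x then pX x' else 0 with hu
  have hab : a ≤ b := by
    refine Finset.sum_le_sum fun K _ => ?_
    by_cases h : x * K = x * Hm
    · simp [h]
    · rw [if_neg h]
      split_ifs
      · exact hpH.1 K
      · exact le_rfl
  have e1 : (∑ ω' : Matrix (Fin T) (Fin M) F × Matrix (Fin M) (Fin N) F,
      if ω'.1 = x ∧ ω'.1 * ω'.2 = x * Hm then jointPMF pX pH ω' else 0) = pX x * a := by
    rw [Fintype.sum_prod_type, Finset.sum_eq_single x]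
    · rw [ha, Finset.mul_sum]
      exact Finset.sum_congr rfl fun K _ => by simp [jointPMF]
    · intro x' _ hx'
      exact Finset.sum_eq_zero fun K _ => by simp [hx']
    · simp
  have e2 : (∑ ω' : Matrix (Fin T) (Fin M) F × Matrix (Fin M) (Fin N) F,
      if ω'.1 = x then jointPMF pX pH ω' else 0) = pX x := by
    rw [Fintype.sum_prod_type, Finset.sum_eq_single x]
    · simp only [if_true, jointPMF]
      rw [← Finset.mul_sum, hpH.2, mul_one]
    · intro x' _ hx'
      exact Finset.sum_eq_zero fun K _ => by simp [hx']
    · simp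
  have e3 : (∑ ω' : Matrix (Fin T) (Fin M) F × Matrix (Fin M) (Fin N) F,
      if rowSpace ω'.1 = rowSpace x ∧ rowSpace (ω'.1 * ω'.2) = rowSpace (x * Hm)
        then jointPMF pX pH ω' else 0) = u * b := by
    rw [Fintype.sum_prod_type, hu, Finset.sum_mul]
    refine Finset.sum_congr rfl fun x' _ => ?_
    by_cases h : rowSpace x' = rowSpace x
    · rw [if_pos h, hb, Finset.mul_sum]
      refine Finset.sum_congr rfl fun K _ => ?_
      obtain ⟨P, Q, hPQ, hQP, hP⟩ := aux_exists_unit x' x h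
      have : rowSpace (x' * K) = rowSpace (x * K) := by
        rw [← hP, Matrix.mul_assoc, aux_rowSpace_unit P Q hQP]
      simp [h, this, jointPMF]
    · simp [h]
  have e4 : (∑ ω' : Matrix (Fin T) (Fin M) F × Matrix (Fin M) (Fin N) F,
      if rowSpace ω'.1 = rowSpace x then jointPMF pX pH ω' else 0) = u := by
    rw [Fintype.sum_prod_type, hu]
    refine Finset.sum_congr rfl fun x' _ => ?_
    split_ifs
    · simp only [jointPMF]
      rw [← Finset.mul_sum, hpH.2, mul_one]
    · simp
  have e5 := aux_PV_le pX pH hα h0 (x * Hm)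
  rw [hq] at e5
  have hnn : ∀ (s : Matrix (Fin T) (Fin M) F × Matrix (Fin M) (Fin N) F → Prop)
      [DecidablePred s], s (x, Hm) → 0 < ∑ ω', if s ω' then jointPMF pX pH ω' else 0 := by
    intro s _ hs
    refine Finset.sum_pos' (fun ω _ => ?_) ⟨(x, Hm), Finset.mem_univ _, ?_⟩
    · split_ifs
      · exact h0 ω
      · exact le_rfl
    · rw [if_pos hs]; exact hpos
  have p1 := hnn (fun ω' => ω'.1 = x ∧ ω'.1 * ω'.2 = x * Hm) ⟨rfl, rfl⟩
  have p3 := hnn (fun ω' => rowSpace ω'.1 = rowSpace x) rfl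
  have p5 := hnn (fun ω' => rowSpace (ω'.1 * ω'.2) = rowSpace (x * Hm)) rfl
  have p6 : 0 < auxPY pX pH (x * Hm) := hnn (fun ω' => ω'.1 * ω'.2 = x * Hm) rfl
  rw [e1] at p1
  rw [e4] at p3
  have hapos : 0 < a := pos_of_mul_pos_right p1 hx0.le
  have hbpos : 0 < b := hapos.trans_le hab
  rw [e1, e2, e3, e4]
  change Real.logb 2 (pX x * a / (pX x * auxPY pX pH (x * Hm))) ≤ _
  set v := ∑ ω' : Matrix (Fin T) (Fin M) F × Matrix (Fin M) (Fin N) F,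
      if rowSpace (ω'.1 * ω'.2) = rowSpace (x * Hm) then jointPMF pX pH ω' else 0 with hv
  set w := auxPY pX pH (x * Hm)
  have hv0 : 0 < v := p5
  rw [Real.logb_div hc1.ne' hc2.ne', mul_div_mul_left _ _ hx0.ne', mul_div_mul_left _ _ p3.ne']
  have key : Real.logb 2 (a / w) ≤ Real.logb 2 ((chi q T (x * Hm).rank : ℝ) * (b / v)) := by
    refine Real.logb_le_logb_of_le (by norm_num) (by positivity) ?_
    rw [← mul_div_assoc, div_le_div_iff₀ p6 hv0]
    calc a * v ≤ b * (chi q T (x * Hm).rank * w) :=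
          mul_le_mul hab e5 hv0.le hbpos.le
      _ = _ := by ring
  rw [Real.logb_mul hc1.ne' (by positivity)] at key
  linarith


end
end
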